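/- Let σ > 0, δ > 0, c > 0, ν > 0, c₂ > 0. Let D = {τ ∈ ℂ : |Im τ| < σ + δ·|Re τ|} (a star-shaped open set with respect to 0). Let ω : ℂ → ℂ be holomorphic on D with |ω(τ)| ≤ c₄ for all τ ∈ D, for some c₄ > 0, and define W(τ) = ∫₀¹ τ·ω(s·τ) ds (the integral of ω along the straight segment from 0 to τ). Assume |W(τ)| ≥ c₂·|τ| for all τ ∈ D. Let h : ℂ → ℂ be holomorphic on D with |h(τ)| ≤ c/(1 + |W(τ)|^(2+ν)) for all τ ∈ D. Then there exists a constant C' > 0 such that for every τ with |Im τ| < (9/10)·σ + δ·|Re τ| one has |h'(τ)| ≤ C'/(1 + |W(τ)|^(2+ν)). -/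

import Mathlib

open Complex intervalIntegral

lemma add_rpow_le_two_rpow_mul {a b p : ℝ} (ha : 0 ≤ a) (hb : 0 ≤ b) (hp : 0 ≤ p) :
    (a + b) ^ p ≤ 2 ^ p * (a ^ p + b ^ p) := by
  have hmax : (max a b) ^ p ≤ a ^ p + b ^ p := by
    have h1 := Real.rpow_nonneg ha p
    have h2 := Real.rpow_nonneg hb p
    rcases max_choice a b with h | h <;> rw [h] <;> linarith
  calc (a + b) ^ p ≤ (2 * max a b) ^ p := by
        refine Real.rpow_le_rpow (by positivity) ?_ hp
        linarith [le_max_left a b, le_max_right a b]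
    _ = 2 ^ p * (max a b) ^ p := Real.mul_rpow (by norm_num) (le_max_of_le_left ha)
    _ ≤ 2 ^ p * (a ^ p + b ^ p) := by gcongr

lemma one_add_rpow_le_of_le_mul_add {a b x y p : ℝ} (ha : 0 ≤ a) (hb : 0 ≤ b) (hx : 0 ≤ x)
    (hy : 0 ≤ y) (hp : 0 ≤ p) (hyx : y ≤ a * x + b) :
    1 + y ^ p ≤ (1 + 2 ^ p * (a ^ p + b ^ p)) * (1 + x ^ p) := by
  have h1 : y ^ p ≤ 2 ^ p * (a ^ p * x ^ p + b ^ p) := by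
    rw [← Real.mul_rpow ha hx]
    exact (Real.rpow_le_rpow hy hyx hp).trans
      (add_rpow_le_two_rpow_mul (mul_nonneg ha hx) hb hp)
  have hX := Real.rpow_nonneg hx p
  have hA : 0 ≤ (2 : ℝ) ^ p * a ^ p := by positivity
  have hB : 0 ≤ (2 : ℝ) ^ p * b ^ p * x ^ p := by positivity
  linear_combination h1 + hA + hB + hX

lemma smul_mem_widening_strip {σ δ s : ℝ} {τ : ℂ} (hσ : 0 < σ) (hs : 0 ≤ s) (hs1 : s ≤ 1)
    (hτ : |τ.im| < σ + δ * |τ.re|) :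
    |((s : ℂ) * τ).im| < σ + δ * |((s : ℂ) * τ).re| := by
  rw [Complex.im_ofReal_mul, Complex.re_ofReal_mul, abs_mul, abs_mul, abs_of_nonneg hs]
  rcases hs.eq_or_lt with rfl | hs0
  · simpa using hσ
  · nlinarith [mul_lt_mul_of_pos_left hτ hs0]

lemma mem_widening_strip_of_dist_le {σ σ' δ r : ℝ} {τ z : ℂ} (hδ : 0 ≤ δ)
    (hr : σ' + (1 + δ) * r ≤ σ) (hτ : |τ.im| < σ' + δ * |τ.re|) (hz : dist z τ ≤ r) :
    |z.im| < σ + δ * |z.re| := by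
  rw [dist_eq_norm] at hz
  have him : |z.im - τ.im| ≤ r := (Complex.abs_im_le_norm (z - τ)).trans hz
  have hre : |τ.re - z.re| ≤ r := by
    rw [abs_sub_comm]
    exact (Complex.abs_re_le_norm (z - τ)).trans hz
  have h1 := abs_sub_abs_le_abs_sub z.im τ.im
  have h2 := mul_le_mul_of_nonneg_left ((abs_sub_abs_le_abs_sub τ.re z.re).trans hre) hδ
  linarith

/-- Single-variable form of Lemma 3: on the widening strip
`D = {τ : |Im τ| < σ + δ|Re τ|}` (star-shaped about 0), let `W τ = ∫₀¹ τ·ω(sτ) ds` be the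
primitive of a bounded holomorphic frequency `ω`, assumed to satisfy `|W τ| ≥ c₂|τ|`.
If `h` is holomorphic on `D` and `|h τ| ≤ c/(1 + |W τ|^(2+ν))`, then `h'` satisfies the
same type of bound on the shrunk strip. -/
theorem stmt_2 (σ δ c ν c₂ c₄ : ℝ) (hσ : 0 < σ) (hδ : 0 < δ) (hc : 0 < c) (hν : 0 < ν)
    (hc₂ : 0 < c₂) (hc₄ : 0 < c₄)
    (ω h : ℂ → ℂ)
    (hωhol : DifferentiableOn ℂ ω {τ : ℂ | |τ.im| < σ + δ * |τ.re|})
    (hωbd : ∀ τ : ℂ, |τ.im| < σ + δ * |τ.re| → ‖ω τ‖ ≤ c₄)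
    (W : ℂ → ℂ)
    (hW : ∀ τ : ℂ, W τ = ∫ s in (0:ℝ)..1, τ * ω ((s : ℂ) * τ))
    (hWlow : ∀ τ : ℂ, |τ.im| < σ + δ * |τ.re| → c₂ * ‖τ‖ ≤ ‖W τ‖)
    (hhol : DifferentiableOn ℂ h {τ : ℂ | |τ.im| < σ + δ * |τ.re|})
    (hbd : ∀ τ : ℂ, |τ.im| < σ + δ * |τ.re| → ‖h τ‖ ≤ c / (1 + ‖W τ‖ ^ (2 + ν))) :
    ∃ C' > 0, ∀ τ : ℂ, |τ.im| < (9 / 10) * σ + δ * |τ.re| →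
      ‖deriv h τ‖ ≤ C' / (1 + ‖W τ‖ ^ (2 + ν)) := by
  have hWup : ∀ τ : ℂ, |τ.im| < σ + δ * |τ.re| → ‖W τ‖ ≤ c₄ * ‖τ‖ := by
    intro τ hτ
    have hint := intervalIntegral.norm_integral_le_of_norm_le_const (a := 0) (b := 1)
      (C := c₄ * ‖τ‖) (f := fun s : ℝ => τ * ω ((s : ℂ) * τ)) fun s hs => by
        rw [Set.uIoc_of_le zero_le_one] at hs
        rw [norm_mul, mul_comm]
        gcongr
        exact hωbd _ (smul_mem_widening_strip hσ hs.1.le hs.2 hτ)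
    rw [hW]
    simpa using hint
  set p := 2 + ν
  have hp : 0 ≤ p := by positivity
  obtain ⟨r, hr, hrσ⟩ : ∃ r > 0, 9 / 10 * σ + (1 + δ) * r ≤ σ := by
    refine ⟨σ / 10 / (1 + δ), by positivity, ?_⟩
    rw [mul_div_cancel₀ _ (by positivity)]
    linarith
  set K := 1 + 2 ^ p * ((c₄ / c₂) ^ p + (c₄ * r) ^ p)
  have hK : 0 < K := by positivity
  refine ⟨c * K / r, by positivity, fun τ hτ => ?_⟩
  have hball : ∀ z ∈ Metric.closedBall τ r, |z.im| < σ + δ * |z.re| := fun z hz =>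
    mem_widening_strip_of_dist_le hδ.le hrσ hτ hz
  have hsphere : ∀ z ∈ Metric.sphere τ r, ‖h z‖ ≤ c * K / (1 + ‖W τ‖ ^ p) := by
    intro z hz
    have hzD := hball z (Metric.sphere_subset_closedBall hz)
    have hτz : ‖τ‖ ≤ ‖z‖ + r := by
      rw [← mem_sphere_iff_norm.1 hz, norm_sub_rev]
      exact norm_le_insert' τ z
    have hWz : ‖W τ‖ ≤ c₄ / c₂ * ‖W z‖ + c₄ * r :=
      calc ‖W τ‖ ≤ c₄ * ‖τ‖ := hWup τ (hball τ (Metric.mem_closedBall_self hr.le))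
        _ ≤ c₄ * (‖z‖ + r) := by gcongr
        _ = c₄ / c₂ * (c₂ * ‖z‖) + c₄ * r := by field_simp
        _ ≤ c₄ / c₂ * ‖W z‖ + c₄ * r := by gcongr; exact hWlow z hzD
    refine (hbd z hzD).trans ?_
    rw [div_le_div_iff₀ (by positivity) (by positivity), mul_assoc]
    gcongr
    exact one_add_rpow_le_of_le_mul_add (by positivity) (by positivity) (norm_nonneg _)
      (norm_nonneg _) hp hWz
  have hdiff : DiffContOnCl ℂ h (Metric.ball τ r) :=
    (hhol.mono fun z hz => hball z (Metric.closure_ball_subset_closedBall hz)).diffContOnCl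
  rw [div_right_comm]
  exact Complex.norm_deriv_le_of_forall_mem_sphere_norm_le hr hdiff hsphere
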